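/- arXiv:2605.10883 — 2 statements merged into one kernel-verified Lean document; each statement's English description precedes it below -/
import Mathlib

section
/- Let a, b be integers with b > a ≥ 2. If f₂(π/a, 0) < 0, then there is no pair (α₁, β₁) ∈ D satisfying the edge-condition system f₁(α₁,β₁) = 0 and f₂(α₁,β₁) = 0. -/
open Real

/-- `B₀₀ = 1 − cos²α₁ − cos²α₂ − cos²β₁ − 2·cos α₁·cos α₂·cos β₁` with `α₂ = 2π/a − 2α₁`. -/
noncomputable def B00 (a : ℤ) (α₁ β₁ : ℝ) : ℝ :=
  1 - cos α₁ ^ 2 - cos (2 * π / (a : ℝ) - 2 * α₁) ^ 2 - cos β₁ ^ 2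
    - 2 * cos α₁ * cos (2 * π / (a : ℝ) - 2 * α₁) * cos β₁

/-- `B₁₁ = 1 − cos²α₁ − cos²β₁ − cos²β₂ − 2·cos α₁·cos β₁·cos β₂` with `β₂ = 2π/b − 2β₁`. -/
noncomputable def B11 (b : ℤ) (α₁ β₁ : ℝ) : ℝ :=
  1 - cos α₁ ^ 2 - cos β₁ ^ 2 - cos (2 * π / (b : ℝ) - 2 * β₁) ^ 2
    - 2 * cos α₁ * cos β₁ * cos (2 * π / (b : ℝ) - 2 * β₁)

/-- `f₁(α₁,β₁) = B₀₀·sin²β₁ − B₁₁·sin²α₂`. -/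
noncomputable def f1 (a b : ℤ) (α₁ β₁ : ℝ) : ℝ :=
  B00 a α₁ β₁ * sin β₁ ^ 2 - B11 b α₁ β₁ * sin (2 * π / (a : ℝ) - 2 * α₁) ^ 2

/-- `f₂(α₁,β₁) = B₁₁·sin²α₁ − B₀₀·sin²β₂`. -/
noncomputable def f2 (a b : ℤ) (α₁ β₁ : ℝ) : ℝ :=
  B11 b α₁ β₁ * sin α₁ ^ 2 - B00 a α₁ β₁ * sin (2 * π / (b : ℝ) - 2 * β₁) ^ 2

/-- The `α₁`-interval of the domain `D`. -/
noncomputable def alphaI (a : ℤ) : Set ℝ :=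
  if a = 2 then Set.Icc (π / 3) (π / 2)
  else if a = 3 then Set.Icc (π / 12) (π / 3)
  else Set.Icc 0 (π / (a : ℝ))

/-- The domain `D ⊂ ℝ²`. -/
noncomputable def Dom (a b : ℤ) : Set (ℝ × ℝ) :=
  alphaI a ×ˢ Set.Icc 0 (π / (b : ℝ))

/-!
The edge conditions compare a hyperbolic triangle with angles `α₁, α₂, β₁` and one with angles
`α₁, β₁, β₂`: `f₂ = 0` says that the side opposite `α₂` in the first is as long as the side
opposite `α₁` in the second. Let `M = cos α₂ + cos α₁ cos β₁` and `N = cos α₁ + cos β₁ cos β₂` be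
the numerators of the hyperbolic cosines of these sides. Then `f₂ = 0` reads
`sin β₂ · M = sin α₁ · N`, and together with `f₁ = 0` it gives `sin β₁ · M = sin α₂ · N`.

Put `u = α₁ + α₂ / 2 = π / a`, `w = 2 β₁ + β₂ = 2π / b`, `K = cos u + cos w` and `L = 1 + cos u`.
For `b ≥ 4` one has `K · M ≤ L · N`, so `K sin α₁ ≤ L sin β₂` and `K sin α₂ ≤ L sin β₁`, and the
addition theorem yields `K sin u ≤ L sin w`. But `f₂(u, 0) = (L sin w)² - (K sin u)²`, so a
solution forces `f₂(u, 0) ≥ 0`. For `b = 3` the value `f₂(u, 0)` is nonnegative outright.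
-/

/-- The Gram determinant of the outward unit normals to the sides of a hyperbolic triangle with
angles `A`, `B`, `C`. It is the common form of `B00` and `B11`. -/
noncomputable def gramDet (A B C : ℝ) : ℝ :=
  1 - cos A ^ 2 - cos B ^ 2 - cos C ^ 2 - 2 * cos A * cos B * cos C

/-- The edge-condition system with `α₂` and `β₂` as independent variables, for the triangles with
angles `α₁, α₂, β₁` and `α₁, β₁, β₂`. The field `edge_beta` is `f₁ = 0`: the side opposite `β₁` in
the first equals the side opposite `β₂` in the second. The field `edge_alpha` is `f₂ = 0`: the side
opposite `α₂` in the first equals the side opposite `α₁` in the second. -/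
structure EdgeCondition (α₁ α₂ β₁ β₂ : ℝ) : Prop where
  edge_beta : gramDet α₂ α₁ β₁ * sin β₁ ^ 2 = gramDet α₁ β₁ β₂ * sin α₂ ^ 2
  edge_alpha : gramDet α₁ β₁ β₂ * sin α₁ ^ 2 = gramDet α₂ α₁ β₁ * sin β₂ ^ 2

lemma edgeCondition_of_f1_f2_eq_zero {a b : ℤ} {α β : ℝ} (h₁ : f1 a b α β = 0)
    (h₂ : f2 a b α β = 0) :
    EdgeCondition α (2 * π / a - 2 * α) β (2 * π / b - 2 * β) := by
  simp only [f1, f2, B00, B11] at h₁ h₂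
  constructor <;> unfold gramDet <;> linarith

lemma gramDet_eq (A B C : ℝ) :
    gramDet A B C = (sin B * sin C) ^ 2 - (cos A + cos B * cos C) ^ 2 := by
  rw [mul_pow, sin_sq, sin_sq, gramDet]
  ring

lemma sin_mul_sin_lt_cos_add_cos_mul_cos {A B C : ℝ} (hA : 0 ≤ A) (hBC : 0 ≤ B + C)
    (hsum : A + B + C < π) : sin B * sin C < cos A + cos B * cos C := by
  have h : cos (π - A) < cos (B + C) :=
    cos_lt_cos_of_nonneg_of_le_pi hBC (by linarith) (by linarith)
  rw [cos_pi_sub, cos_add] at h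
  linarith

lemma gramDet_neg {A B C : ℝ} (hA : 0 ≤ A) (hB : 0 ≤ B) (hC : 0 ≤ C) (hsum : A + B + C < π) :
    gramDet A B C < 0 := by
  have hsin : 0 ≤ sin B * sin C :=
    mul_nonneg (sin_nonneg_of_nonneg_of_le_pi hB (by linarith))
      (sin_nonneg_of_nonneg_of_le_pi hC (by linarith))
  have hlt := sin_mul_sin_lt_cos_add_cos_mul_cos hA (add_nonneg hB hC) hsum
  rw [gramDet_eq, sub_neg]
  exact pow_lt_pow_left₀ hlt hsin two_ne_zero

namespace EdgeCondition

variable {α₁ α₂ β₁ β₂ : ℝ}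

lemma sq_sin_β₂_mul (h : EdgeCondition α₁ α₂ β₁ β₂) :
    (sin β₂ * (cos α₂ + cos α₁ * cos β₁)) ^ 2 = (sin α₁ * (cos α₁ + cos β₁ * cos β₂)) ^ 2 := by
  have h₂ := h.edge_alpha
  rw [gramDet_eq, gramDet_eq] at h₂
  linear_combination h₂

lemma sq_sin_mul_sin (h : EdgeCondition α₁ α₂ β₁ β₂) (hG : gramDet α₂ α₁ β₁ ≠ 0) :
    (sin α₁ * sin β₁) ^ 2 = (sin α₂ * sin β₂) ^ 2 := by
  refine mul_left_cancel₀ hG ?_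
  linear_combination sin α₁ ^ 2 * h.edge_beta + sin α₂ ^ 2 * h.edge_alpha

lemma sq_sin_β₁_mul (h : EdgeCondition α₁ α₂ β₁ β₂) (hG : gramDet α₂ α₁ β₁ ≠ 0) :
    (sin β₁ * (cos α₂ + cos α₁ * cos β₁)) ^ 2 = (sin α₂ * (cos α₁ + cos β₁ * cos β₂)) ^ 2 := by
  have h₁ := h.edge_beta
  rw [gramDet_eq, gramDet_eq] at h₁
  linear_combination sin β₁ ^ 2 * h.sq_sin_mul_sin hG - h₁

end EdgeCondition

lemma mul_le_mul_of_sq_mul_eq_sq_mul {K L M N s t : ℝ} (hM : 0 < M) (hN : 0 ≤ N) (hs : 0 ≤ s)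
    (ht : 0 ≤ t) (hKL : K * M ≤ L * N) (h : (s * M) ^ 2 = (t * N) ^ 2) : K * t ≤ L * s := by
  have hst : s * M = t * N := (sq_eq_sq₀ (mul_nonneg hs hM.le) (mul_nonneg ht hN)).1 h
  refine le_of_mul_le_mul_right ?_ hM
  calc K * t * M = t * (K * M) := by ring
    _ ≤ t * (L * N) := mul_le_mul_of_nonneg_left hKL ht
    _ = L * (t * N) := by ring
    _ = L * s * M := by rw [← hst]; ring

lemma EdgeCondition.mul_sin_le_mul_sin {α₁ α₂ β₁ β₂ K L : ℝ} (h : EdgeCondition α₁ α₂ β₁ β₂)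
    (hα₁ : 0 ≤ α₁) (hα₂ : 0 ≤ α₂) (hβ₁ : 0 ≤ β₁) (hβ₂ : 0 ≤ sin β₂) (hsum : α₂ + α₁ + β₁ < π)
    (hN : 0 ≤ cos α₁ + cos β₁ * cos β₂)
    (hKL : K * (cos α₂ + cos α₁ * cos β₁) ≤ L * (cos α₁ + cos β₁ * cos β₂)) :
    K * sin α₁ ≤ L * sin β₂ ∧ K * sin α₂ ≤ L * sin β₁ := by
  have hsinα₁ : 0 ≤ sin α₁ := sin_nonneg_of_nonneg_of_le_pi hα₁ (by linarith)
  have hsinα₂ : 0 ≤ sin α₂ := sin_nonneg_of_nonneg_of_le_pi hα₂ (by linarith)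
  have hsinβ₁ : 0 ≤ sin β₁ := sin_nonneg_of_nonneg_of_le_pi hβ₁ (by linarith)
  have hG : gramDet α₂ α₁ β₁ ≠ 0 := (gramDet_neg hα₂ hα₁ hβ₁ hsum).ne
  have hM : 0 < cos α₂ + cos α₁ * cos β₁ := (mul_nonneg hsinα₁ hsinβ₁).trans_lt
    (sin_mul_sin_lt_cos_add_cos_mul_cos hα₂ (add_nonneg hα₁ hβ₁) hsum)
  exact ⟨mul_le_mul_of_sq_mul_eq_sq_mul hM hN hβ₂ hsinα₁ hKL h.sq_sin_β₂_mul,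
    mul_le_mul_of_sq_mul_eq_sq_mul hM hN hsinβ₁ hsinα₂ hKL (h.sq_sin_β₁_mul hG)⟩

lemma mul_sin_le_mul_sin_min {K L x p : ℝ} (hKL : K ≤ L) (hx : 0 ≤ sin x)
    (h : K * sin x ≤ L * sin p) : K * sin x ≤ L * sin (min p x) := by
  rcases min_choice p x with hmin | hmin <;> rw [hmin]
  · exact h
  · exact mul_le_mul_of_nonneg_right hKL hx

lemma mul_sin_add_le_mul_sin_add {K L x y p q : ℝ} (hK : 0 ≤ K) (hKL : K ≤ L)
    (hx : x ∈ Set.Icc 0 (π / 2)) (hy : y ∈ Set.Icc 0 (π / 2)) (hp : 0 ≤ p) (hq : 0 ≤ q)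
    (hpq : p + q ≤ π / 2) (hxp : K * sin x ≤ L * sin p) (hyq : K * sin y ≤ L * sin q) :
    K * sin (x + y) ≤ L * sin (p + q) := by
  obtain ⟨hx₀, hx₁⟩ := hx
  obtain ⟨hy₀, hy₁⟩ := hy
  have hL : 0 ≤ L := hK.trans hKL
  -- Capping `p` at `x` and `q` at `y` keeps both hypotheses and makes the cosines comparable.
  set p' := min p x
  set q' := min q y
  have hp' : 0 ≤ p' := le_min hp hx₀
  have hq' : 0 ≤ q' := le_min hq hy₀
  have hp'p : p' ≤ p := min_le_left p x
  have hq'q : q' ≤ q := min_le_left q y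
  have hxp' : K * sin x ≤ L * sin p' :=
    mul_sin_le_mul_sin_min hKL (sin_nonneg_of_nonneg_of_le_pi hx₀ (by linarith)) hxp
  have hyq' : K * sin y ≤ L * sin q' :=
    mul_sin_le_mul_sin_min hKL (sin_nonneg_of_nonneg_of_le_pi hy₀ (by linarith)) hyq
  have hcosx : cos x ≤ cos p' := cos_le_cos_of_nonneg_of_le_pi hp' (by linarith) (min_le_right p x)
  have hcosy : cos y ≤ cos q' := cos_le_cos_of_nonneg_of_le_pi hq' (by linarith) (min_le_right q y)
  have hcosx₀ : 0 ≤ cos x := cos_nonneg_of_mem_Icc ⟨by linarith, hx₁⟩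
  have hcosy₀ : 0 ≤ cos y := cos_nonneg_of_mem_Icc ⟨by linarith, hy₁⟩
  have hsinp' : 0 ≤ sin p' := sin_nonneg_of_nonneg_of_le_pi hp' (by linarith)
  have hsinq' : 0 ≤ sin q' := sin_nonneg_of_nonneg_of_le_pi hq' (by linarith)
  calc K * sin (x + y) = K * sin x * cos y + K * sin y * cos x := by rw [sin_add]; ring
    _ ≤ L * sin p' * cos q' + L * sin q' * cos p' := by gcongr
    _ = L * sin (p' + q') := by rw [sin_add]; ring
    _ ≤ L * sin (p + q) := mul_le_mul_of_nonneg_left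
        (sin_le_sin_of_le_of_le_pi_div_two (by linarith) hpq (by linarith)) hL

lemma sin_half_le_sin {x : ℝ} (hx : 0 ≤ x) (hx' : x ≤ 2 * π / 3) : sin (x / 2) ≤ sin x := by
  have hcos : 1 / 2 ≤ cos (x / 2) := by
    rw [← cos_pi_div_three]
    exact cos_le_cos_of_nonneg_of_le_pi (by linarith) (by linarith [pi_pos]) (by linarith)
  have hsin : 0 ≤ sin (x / 2) := sin_nonneg_of_nonneg_of_le_pi (by linarith) (by linarith [pi_pos])
  calc sin (x / 2) ≤ sin (x / 2) * (2 * cos (x / 2)) :=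
        le_mul_of_one_le_right hsin (by linarith)
    _ = sin (2 * (x / 2)) := by rw [sin_two_mul]; ring
    _ = sin x := by rw [mul_div_cancel₀ x two_ne_zero]

lemma cos_two_mul_add_le_cos_mul_cos {x y : ℝ} (hx : 0 ≤ x) (hy : 0 ≤ y) (hxy : 2 * x + y ≤ π) :
    cos (2 * x + y) ≤ cos x * cos y := by
  have hcos : cos (2 * x + y) ≤ cos (x + y) :=
    cos_le_cos_of_nonneg_of_le_pi (by linarith) hxy (by linarith)
  have hsin : 0 ≤ sin x * sin y :=
    mul_nonneg (sin_nonneg_of_nonneg_of_le_pi hx (by linarith))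
      (sin_nonneg_of_nonneg_of_le_pi hy (by linarith))
  linarith [cos_add x y]

lemma add_mul_cos_add_le {c d α₁ α₂ β₁ β₂ : ℝ} (hc : 0 ≤ c) (hd : 0 ≤ d) (hd₁ : d ≤ 1)
    (hcα : c ≤ cos α₁) (hdβ : d ≤ cos β₁ * cos β₂) :
    (c + d) * (cos α₂ + cos α₁ * cos β₁) ≤ (1 + c) * (cos α₁ + cos β₁ * cos β₂) := by
  have hM : cos α₂ + cos α₁ * cos β₁ ≤ 1 + cos α₁ :=
    add_le_add (cos_le_one α₂) (mul_le_of_le_one_right (hc.trans hcα) (cos_le_one β₁))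
  calc (c + d) * (cos α₂ + cos α₁ * cos β₁) ≤ (c + d) * (1 + cos α₁) := by gcongr
    _ ≤ (1 + c) * (cos α₁ + d) := by linarith [mul_nonneg (sub_nonneg.2 hcα) (sub_nonneg.2 hd₁)]
    _ ≤ (1 + c) * (cos α₁ + cos β₁ * cos β₂) := by gcongr

theorem EdgeCondition.add_cos_mul_sin_le {α₁ α₂ β₁ β₂ u w : ℝ} (h : EdgeCondition α₁ α₂ β₁ β₂)
    (hα₁ : 0 ≤ α₁) (hα₂ : 0 ≤ α₂) (hβ₁ : 0 ≤ β₁) (hβ₂ : 0 ≤ β₂) (hu : α₁ + α₂ / 2 = u)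
    (hw : 2 * β₁ + β₂ = w) (hα : α₁ + α₂ ≤ 2 * π / 3) (hu₁ : u ≤ π / 2) (hw₁ : w ≤ π / 2) :
    (cos u + cos w) * sin u ≤ (1 + cos u) * sin w := by
  have hpi := pi_pos
  have hcosu : 0 ≤ cos u := cos_nonneg_of_mem_Icc ⟨by linarith, hu₁⟩
  have hcosw : 0 ≤ cos w := cos_nonneg_of_mem_Icc ⟨by linarith, hw₁⟩
  have hcosα₁ : cos u ≤ cos α₁ :=
    cos_le_cos_of_nonneg_of_le_pi hα₁ (by linarith) (by linarith)
  have hcosβ : cos w ≤ cos β₁ * cos β₂ :=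
    hw ▸ cos_two_mul_add_le_cos_mul_cos hβ₁ hβ₂ (by linarith)
  obtain ⟨hβ₂_bound, hβ₁_bound⟩ := h.mul_sin_le_mul_sin hα₁ hα₂ hβ₁
    (sin_nonneg_of_nonneg_of_le_pi hβ₂ (by linarith)) (by linarith) (by linarith)
    (add_mul_cos_add_le hcosu hcosw (cos_le_one w) hcosα₁ hcosβ)
  have hhalf : sin (α₂ / 2) ≤ sin α₂ := sin_half_le_sin hα₂ (by linarith)
  calc (cos u + cos w) * sin u = (cos u + cos w) * sin (α₁ + α₂ / 2) := by rw [hu]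
    _ ≤ (1 + cos u) * sin (β₂ + β₁) :=
      mul_sin_add_le_mul_sin_add (by linarith) (by linarith [cos_le_one w])
        ⟨hα₁, by linarith⟩ ⟨by linarith, by linarith⟩ hβ₂ hβ₁ (by linarith) hβ₂_bound
        ((mul_le_mul_of_nonneg_left hhalf (by linarith)).trans hβ₁_bound)
    _ ≤ (1 + cos u) * sin w := mul_le_mul_of_nonneg_left
      (sin_le_sin_of_le_of_le_pi_div_two (by linarith) hw₁ (by linarith)) (by linarith)

lemma f2_corner (a b : ℤ) :
    f2 a b (π / a) 0 = ((1 + cos (π / a)) * sin (2 * π / b)) ^ 2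
      - ((cos (π / a) + cos (2 * π / b)) * sin (π / a)) ^ 2 := by
  have hα₂ : 2 * π / (a : ℝ) - 2 * (π / a) = 0 := by ring
  simp only [f2, B00, B11, hα₂, mul_zero, sub_zero, cos_zero]
  ring

lemma pi_div_intCast_mem_Icc {a : ℤ} (ha : 2 ≤ a) : π / (a : ℝ) ∈ Set.Icc 0 (π / 2) := by
  have ha' : (2 : ℝ) ≤ a := by exact_mod_cast ha
  exact ⟨by positivity, by gcongr⟩

lemma f2_corner_three_nonneg {a : ℤ} (ha : 2 ≤ a) : 0 ≤ f2 a 3 (π / a) 0 := by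
  obtain ⟨hu₀, hu₁⟩ := pi_div_intCast_mem_Icc ha
  have hcos₀ : 0 ≤ cos (π / a) := cos_nonneg_of_mem_Icc ⟨by linarith, hu₁⟩
  have hcos₁ := cos_le_one (π / a)
  have hangle : 2 * π / ((3 : ℤ) : ℝ) = π - π / 3 := by push_cast; ring
  rw [f2_corner, hangle, sin_pi_sub, cos_pi_sub, sin_pi_div_three, cos_pi_div_three, mul_pow,
    mul_pow, sin_sq, div_pow, sq_sqrt (by norm_num)]
  generalize cos (π / a) = c at *
  have hcubic : 0 ≤ 1 / 2 + 2 * c * (1 - c) + c ^ 3 := by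
    have := sub_nonneg.2 hcos₁
    positivity
  linarith [mul_nonneg (by linarith : 0 ≤ 1 + c) hcubic]

lemma bounds_of_mem_alphaI {a : ℤ} {x : ℝ} (ha : 2 ≤ a) (hx : x ∈ alphaI a) :
    0 ≤ x ∧ x ≤ π / a ∧ x + (2 * π / a - 2 * x) ≤ 2 * π / 3 := by
  have hpi := pi_pos
  unfold alphaI at hx
  split_ifs at hx with ha₂ ha₃
  · subst ha₂
    push_cast
    refine ⟨?_, ?_, ?_⟩ <;> linarith [hx.1, hx.2]
  · subst ha₃
    push_cast
    refine ⟨?_, ?_, ?_⟩ <;> linarith [hx.1, hx.2]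
  · have ha₄ : (3 : ℝ) ≤ a := by exact_mod_cast (by omega : 3 ≤ a)
    have : 2 * π / (a : ℝ) ≤ 2 * π / 3 := by gcongr
    exact ⟨hx.1, hx.2, by linarith [hx.1]⟩

lemma f2_corner_nonneg_of_solution {a b : ℤ} {x y : ℝ} (ha : 2 ≤ a) (hb : 4 ≤ b)
    (hxy : (x, y) ∈ Dom a b) (h₁ : f1 a b x y = 0) (h₂ : f2 a b x y = 0) :
    0 ≤ f2 a b (π / a) 0 := by
  obtain ⟨hx, hy₀, hy₁⟩ := hxy
  obtain ⟨hx₀, hx₁, hα⟩ := bounds_of_mem_alphaI ha hx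
  obtain ⟨hu₀, hu₁⟩ := pi_div_intCast_mem_Icc ha
  have hb' : (4 : ℝ) ≤ b := by exact_mod_cast hb
  have hw₁ : 2 * π / (b : ℝ) ≤ π / 2 := by
    calc 2 * π / (b : ℝ) ≤ 2 * π / 4 := by gcongr
      _ = π / 2 := by ring
  have hcos : 0 ≤ cos (π / a) := cos_nonneg_of_mem_Icc ⟨by linarith, hu₁⟩
  have hcos' : 0 ≤ cos (2 * π / b) :=
    cos_nonneg_of_mem_Icc ⟨by linarith [show 0 ≤ 2 * π / (b : ℝ) by positivity, pi_pos], hw₁⟩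
  have hsin : 0 ≤ sin (π / a) := sin_nonneg_of_nonneg_of_le_pi hu₀ (by linarith)
  have hle := (edgeCondition_of_f1_f2_eq_zero h₁ h₂).add_cos_mul_sin_le hx₀
    (by rw [mul_div_assoc]; linarith) hy₀ (by rw [mul_div_assoc]; linarith)
    (by ring : _ = π / (a : ℝ)) (by ring : _ = 2 * π / (b : ℝ)) hα hu₁ hw₁
  rw [f2_corner, sub_nonneg]
  exact pow_le_pow_left₀ (by positivity) hle 2

theorem stmt8_general (a b : ℤ) (ha : 2 ≤ a) (hb : 3 ≤ b) (h : f2 a b (π / (a : ℝ)) 0 < 0) :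
    ¬ ∃ p : ℝ × ℝ, p ∈ Dom a b ∧ f1 a b p.1 p.2 = 0 ∧ f2 a b p.1 p.2 = 0 := by
  rintro ⟨⟨x, y⟩, hxy, h₁, h₂⟩
  refine h.not_ge ?_
  obtain rfl | hb₄ : b = 3 ∨ 4 ≤ b := by omega
  · exact f2_corner_three_nonneg ha
  · exact f2_corner_nonneg_of_solution ha hb₄ hxy h₁ h₂

theorem stmt8 (a b : ℤ) (ha : 2 ≤ a) (hab : a < b)
    (h : f2 a b (π / (a : ℝ)) 0 < 0) :
    ¬ ∃ p : ℝ × ℝ, p ∈ Dom a b ∧ f1 a b p.1 p.2 = 0 ∧ f2 a b p.1 p.2 = 0 :=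
  stmt8_general a b ha (by omega) h
end

section
/- Let a, b be integers with b > a ≥ 2. If f₂(α₁, 0) > 0 for every α₁ in the α₁-interval of D, then the edge-condition system f₁(α₁,β₁) = 0, f₂(α₁,β₁) = 0 has exactly one solution (α₁, β₁) in D. -/
open Real

/-! The triangles with angles `(α₁, α₂, β₁)` and `(α₁, β₁, β₂)` are hyperbolic wherever the edge
conditions can hold, so taking square roots turns the two conditions into
`sin β₁ = r sin α₂` and `sin β₂ = r sin α₁` for one ratio `r > 0`, together with a comparison of two
hyperbolic cosines. One finds `r < 1` and `α₂ < β₂ < α₁`. Of two solutions, the one with the larger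
`α₁` has the smaller `β₁` and the larger `r`, and then the cosine comparison fails for it.

For existence, eliminating `r` leaves the curve `sin α₁ sin β₁ = sin α₂ sin β₂`, which is the graph
of a continuous function of `α₁`. On it the edge conditions amount to `f₂ - f₁ = 0`. This function
is negative at the left end, where `α₁ ≤ α₂`, and at the right end the curve reaches `(π/a, 0)`,
where `f₁ = 0` and `f₂ ≥ 0`. -/

section Topology

open Set

lemma continuous_of_isClosed_graph {X Y : Type*} [TopologicalSpace X] [TopologicalSpace Y]
    [CompactSpace Y] {g : X → Y} (hg : IsClosed {z : X × Y | z.2 = g z.1}) : Continuous g := by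
  refine continuous_iff_isClosed.2 fun C hC => ?_
  have hpre : g ⁻¹' C = Prod.fst '' ({z : X × Y | z.2 = g z.1} ∩ Prod.snd ⁻¹' C) := by
    ext x
    simp [eq_comm]
  rw [hpre]
  exact isClosedMap_fst_of_compactSpace _ (hg.inter (hC.preimage continuous_snd))

lemma exists_mem_eq_zero_of_isClosed_of_existsUnique {X Y : Type*} [TopologicalSpace X]
    [PreconnectedSpace X] [TopologicalSpace Y] [CompactSpace Y] {S : Set (X × Y)}
    (hS : IsClosed S) (hSu : ∀ x, ∃! y, (x, y) ∈ S) {F : X × Y → ℝ} (hF : Continuous F)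
    {z w : X × Y} (hz : z ∈ S) (hw : w ∈ S) (hFz : F z ≤ 0) (hFw : 0 ≤ F w) :
    ∃ v ∈ S, F v = 0 := by
  choose g hgS hgu using hSu
  have hgraph : ∀ v, v ∈ S ↔ v.2 = g v.1 := fun v =>
    ⟨hgu v.1 v.2, fun hv => by simpa only [← hv] using hgS v.1⟩
  have hg : Continuous g :=
    continuous_of_isClosed_graph (by simpa only [← hgraph, ofPred_mem_eq] using hS)
  have hFg : ∀ v ∈ S, F (v.1, g v.1) = F v := fun v hv => by rw [← (hgraph v).1 hv]
  obtain ⟨x, hx⟩ := mem_range_of_exists_le_of_exists_ge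
    (hF.comp (continuous_id.prodMk hg))
    ⟨z.1, (hFg z hz).trans_le hFz⟩ ⟨w.1, hFw.trans_eq (hFg w hw).symm⟩
  exact ⟨(x, g x), hgS x, hx⟩

end Topology

section Sine

lemma sin_lt_sin_of_lt_of_add_lt_pi {u v : ℝ} (hu : 0 ≤ u) (huv : u < v) (h : u + v < π) :
    sin u < sin v := by
  have hs : 0 < sin ((v - u) / 2) := sin_pos_of_pos_of_lt_pi (by linarith) (by linarith)
  have hc : 0 < cos ((v + u) / 2) := cos_pos_of_mem_Ioo ⟨by linarith, by linarith⟩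
  rw [← sub_pos, sin_sub_sin]
  positivity

lemma sin_sub_sin_le_sub {u v : ℝ} (huv : u ≤ v) : sin v - sin u ≤ v - u :=
  (le_abs_self _).trans ((abs_sin_sub_sin_le v u).trans_eq (abs_of_nonneg (sub_nonneg.2 huv)))

lemma half_sub_le_sin_sub_sin {u v : ℝ} (hu : 0 ≤ u) (huv : u ≤ v) (hv : v ≤ π / 3) :
    1 / 2 * (v - u) ≤ sin v - sin u := by
  refine (convex_Icc 0 (π / 3)).mul_sub_le_image_sub_of_le_deriv continuous_sin.continuousOn
    differentiable_sin.differentiableOn (fun t ht => ?_) u ⟨hu, huv.trans hv⟩ v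
    ⟨hu.trans huv, hv⟩ huv
  rw [interior_Icc] at ht
  rw [Real.deriv_sin, ← cos_pi_div_three]
  exact cos_le_cos_of_nonneg_of_le_pi ht.1.le (by linarith [pi_pos]) ht.2.le

lemma sin_sub_sin_le_mul_cos {u v : ℝ} (huv : u ≤ v) (hc : 0 ≤ cos ((v + u) / 2)) :
    sin v - sin u ≤ (v - u) * cos ((v + u) / 2) := by
  have hs : sin ((v - u) / 2) ≤ (v - u) / 2 := sin_le (by linarith)
  calc sin v - sin u = 2 * sin ((v - u) / 2) * cos ((v + u) / 2) := sin_sub_sin v u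
    _ ≤ 2 * ((v - u) / 2) * cos ((v + u) / 2) := by gcongr
    _ = (v - u) * cos ((v + u) / 2) := by ring

lemma half_sub_mul_cos_le_sin_sub_sin {u v : ℝ} (huv : u ≤ v) (hvu : v - u ≤ 2 * π / 3)
    (hc : 0 ≤ cos ((v + u) / 2)) :
    1 / 2 * (v - u) * cos ((v + u) / 2) ≤ sin v - sin u := by
  have hs := half_sub_le_sin_sub_sin le_rfl
    (show 0 ≤ (v - u) / 2 by linarith) (by linarith)
  rw [sin_zero, sub_zero, sub_zero] at hs
  calc 1 / 2 * (v - u) * cos ((v + u) / 2)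
      = 2 * (1 / 2 * ((v - u) / 2)) * cos ((v + u) / 2) := by ring
    _ ≤ 2 * sin ((v - u) / 2) * cos ((v + u) / 2) := by gcongr
    _ = sin v - sin u := (sin_sub_sin v u).symm

/-- The ratio `sin (B - u) / sin (2 * u) = sin B / (2 * sin u) - cos B / (2 * cos u)` decreases
in `u`. -/
lemma sin_sub_mul_sin_two_mul_lt {B u v : ℝ} (hB : 0 < B) (hB2 : B ≤ π / 2) (hv : 0 ≤ v)
    (hvu : v < u) (hu : u < π / 2) :
    sin (B - u) * sin (2 * v) < sin (B - v) * sin (2 * u) := by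
  have hsB : 0 < sin B := sin_pos_of_pos_of_lt_pi hB (by linarith)
  have hcB : 0 ≤ cos B := cos_nonneg_of_mem_Icc ⟨by linarith, hB2⟩
  have hcu : 0 < cos u := cos_pos_of_mem_Ioo ⟨by linarith, hu⟩
  have hcv : 0 < cos v := cos_pos_of_mem_Ioo ⟨by linarith, by linarith⟩
  have hsv : 0 ≤ sin v := sin_nonneg_of_nonneg_of_le_pi hv (by linarith)
  have hsu : 0 ≤ sin u := sin_nonneg_of_nonneg_of_le_pi (by linarith) (by linarith)
  have hsin : 0 < sin u - sin v :=
    sub_pos.2 (sin_lt_sin_of_lt_of_le_pi_div_two (by linarith) hu.le hvu)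
  have hcos : 0 ≤ cos v - cos u :=
    sub_nonneg.2 (cos_le_cos_of_nonneg_of_le_pi hv (by linarith) hvu.le)
  have hdiff : sin (B - v) * sin (2 * u) - sin (B - u) * sin (2 * v) =
      2 * (sin B * (cos u * cos v) * (sin u - sin v) +
        cos B * (sin u * sin v) * (cos v - cos u)) := by
    rw [sin_sub, sin_sub, sin_two_mul, sin_two_mul]
    ring
  rw [← sub_pos, hdiff]
  positivity

lemma existsUnique_mul_sin_eq {B s p : ℝ} (hB : 0 < B) (hB2 : B < π / 2) (hs : 0 ≤ s)
    (hp : 0 ≤ p) (hsp : 0 < s ^ 2 + p ^ 2) :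
    ∃! y : Set.Icc 0 B, s * sin y = p * sin (2 * B - 2 * y) := by
  have hexists : ∃ y ∈ Set.Icc 0 B, s * sin y - p * sin (2 * B - 2 * y) = 0 := by
    refine intermediate_value_Icc hB.le
      (f := fun y => s * sin y - p * sin (2 * B - 2 * y)) (by fun_prop) ⟨?_, ?_⟩
    · have := mul_nonneg hp (sin_nonneg_of_nonneg_of_le_pi (x := 2 * B) (by linarith)
        (by linarith))
      simpa using this
    · have := mul_nonneg hs (sin_nonneg_of_nonneg_of_le_pi hB.le (by linarith))
      simpa using this
  have hnot_lt : ∀ y ∈ Set.Icc 0 B, ∀ y' ∈ Set.Icc 0 B, s * sin y = p * sin (2 * B - 2 * y) →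
      s * sin y' = p * sin (2 * B - 2 * y') → ¬ y < y' := by
    intro y hy y' hy' hc hc' hlt
    have hne := (sin_sub_mul_sin_two_mul_lt hB hB2.le (sub_nonneg.2 hy'.2)
      (sub_lt_sub_left hlt B) (by linarith [hy.1])).ne
    rw [sub_sub_cancel, sub_sub_cancel, mul_sub, mul_sub] at hne
    have hs0 : s = 0 := by
      by_contra hs0
      exact hne (mul_left_cancel₀ hs0
        (by linear_combination sin (2 * B - 2 * y') * hc - sin (2 * B - 2 * y) * hc'))
    have hp0 : p = 0 := by
      by_contra hp0
      exact hne (mul_left_cancel₀ hp0 (by linear_combination sin y' * hc - sin y * hc'))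
    simp [hs0, hp0] at hsp
  obtain ⟨y, hy, hc⟩ := hexists
  refine ⟨⟨y, hy⟩, sub_eq_zero.1 hc, fun y' hc' => Subtype.ext (le_antisymm ?_ ?_)⟩
  · exact not_lt.1 (hnot_lt y hy y' y'.2 (sub_eq_zero.1 hc) hc')
  · exact not_lt.1 (hnot_lt y' y'.2 y hy hc' (sub_eq_zero.1 hc))

end Sine

/-- Minus the Gram determinant of a triangle with angles `x`, `y`, `z`. It is positive for
hyperbolic triangles, in which the side between `x` and `y` has hyperbolic sine
`√(hypDisc x y z) / (sin x * sin y)` and hyperbolic cosine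
`(cos z + cos x * cos y) / (sin x * sin y)`. -/
noncomputable def hypDisc (x y z : ℝ) : ℝ :=
  cos x ^ 2 + cos y ^ 2 + cos z ^ 2 + 2 * cos x * cos y * cos z - 1

section HypDisc

lemma hypDisc_eq_mul (x y z : ℝ) :
    hypDisc x y z = (cos z + cos (x + y)) * (cos z + cos (x - y)) := by
  rw [cos_add, cos_sub, hypDisc]
  linear_combination sin y ^ 2 * sin_sq x + (1 - cos x ^ 2) * sin_sq y

lemma hypDisc_add_sin_sq_mul (x y z : ℝ) :
    hypDisc x y z + sin x ^ 2 * sin y ^ 2 = (cos z + cos x * cos y) ^ 2 := by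
  rw [hypDisc, sin_sq, sin_sq]
  ring

lemma hypDisc_rotate (x y z : ℝ) : hypDisc x y z = hypDisc y z x := by
  simp only [hypDisc]
  ring

lemma hypDisc_sub_hypDisc (x y p q : ℝ) :
    hypDisc x y q - hypDisc x p y = (cos q - cos p) * (cos p + cos q + 2 * cos x * cos y) := by
  simp only [hypDisc]
  ring

lemma hypDisc_pos {x y z : ℝ} (hx : 0 ≤ x) (hy : 0 ≤ y) (hz : 0 ≤ z) (h : x + y + z < π) :
    0 < hypDisc x y z := by
  have hadd : 0 < cos z + cos (x + y) := by
    have := cos_lt_cos_of_nonneg_of_le_pi hz (by linarith) (show z < π - (x + y) by linarith)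
    rw [cos_pi_sub] at this
    linarith
  have hsub : cos (x + y) ≤ cos (x - y) := by
    have := mul_nonneg (sin_nonneg_of_nonneg_of_le_pi hx (by linarith))
      (sin_nonneg_of_nonneg_of_le_pi hy (by linarith))
    rw [cos_add, cos_sub]
    linarith
  rw [hypDisc_eq_mul]
  exact mul_pos hadd (by linarith)

end HypDisc

/-- The constraints on the angles that a point of the domain satisfies; there
`α₂ + 2 * α₁ = 2π/a` and `β₂ + 2 * β₁ = 2π/b`. -/
structure ConfigAngles (α₁ α₂ β₁ β₂ : ℝ) : Prop where
  α₁_nonneg : 0 ≤ α₁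
  α₂_nonneg : 0 ≤ α₂
  β₁_nonneg : 0 ≤ β₁
  β₂_nonneg : 0 ≤ β₂
  β_pos : 0 < β₂ + 2 * β₁
  β_lt_α : β₂ + 2 * β₁ < α₂ + 2 * α₁
  α_le : α₂ + 2 * α₁ ≤ π
  β_le : β₂ + 2 * β₁ ≤ 2 * π / 3
  α₂_le : α₂ ≤ π / 2
  α₁_add_α₂_le : α₁ + α₂ ≤ 2 * π / 3
  β_le_or_le_α₁ : β₂ + 2 * β₁ ≤ π / 2 ∨ π / 3 ≤ α₁

/-- The edge conditions `f₁ = 0` and `f₂ = 0`. They say that in the hyperbolic triangle with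
angles `(α₁, α₂, β₁)` the sides opposite `β₁` and `α₂` are as long as the sides opposite `β₂` and
`α₁`, respectively, in the triangle with angles `(α₁, β₁, β₂)`. -/
def IsEdgeSolution (α₁ α₂ β₁ β₂ : ℝ) : Prop :=
  hypDisc α₁ α₂ β₁ * sin β₁ ^ 2 = hypDisc α₁ β₁ β₂ * sin α₂ ^ 2 ∧
    hypDisc α₁ β₁ β₂ * sin α₁ ^ 2 = hypDisc α₁ α₂ β₁ * sin β₂ ^ 2

/-- The difference `f₂ - f₁`, which detects the solutions of the edge conditions on the curve
`sin α₁ * sin β₁ = sin α₂ * sin β₂`. -/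
noncomputable def edgeDefect (α₁ α₂ β₁ β₂ : ℝ) : ℝ :=
  hypDisc α₁ α₂ β₁ * (sin β₁ ^ 2 + sin β₂ ^ 2) - hypDisc α₁ β₁ β₂ * (sin α₁ ^ 2 + sin α₂ ^ 2)

namespace ConfigAngles

variable {α₁ α₂ β₁ β₂ : ℝ}

lemma sin_α₁_nonneg (h : ConfigAngles α₁ α₂ β₁ β₂) : 0 ≤ sin α₁ :=
  sin_nonneg_of_nonneg_of_le_pi h.α₁_nonneg (by linarith [h.α₂_nonneg, h.α_le, pi_pos])

lemma sin_α₂_nonneg (h : ConfigAngles α₁ α₂ β₁ β₂) : 0 ≤ sin α₂ :=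
  sin_nonneg_of_nonneg_of_le_pi h.α₂_nonneg (by linarith [h.α₂_le, pi_pos])

lemma sin_β₁_nonneg (h : ConfigAngles α₁ α₂ β₁ β₂) : 0 ≤ sin β₁ :=
  sin_nonneg_of_nonneg_of_le_pi h.β₁_nonneg (by linarith [h.β₂_nonneg, h.β_le, pi_pos])

lemma sin_β₂_nonneg (h : ConfigAngles α₁ α₂ β₁ β₂) : 0 ≤ sin β₂ :=
  sin_nonneg_of_nonneg_of_le_pi h.β₂_nonneg (by linarith [h.β₁_nonneg, h.β_le, pi_pos])

lemma cos_α₁_nonneg (h : ConfigAngles α₁ α₂ β₁ β₂) : 0 ≤ cos α₁ :=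
  cos_nonneg_of_mem_Icc
    ⟨by linarith [h.α₁_nonneg, pi_pos], by linarith [h.α₂_nonneg, h.α_le]⟩

lemma cos_α₂_nonneg (h : ConfigAngles α₁ α₂ β₁ β₂) : 0 ≤ cos α₂ :=
  cos_nonneg_of_mem_Icc ⟨by linarith [h.α₂_nonneg, pi_pos], h.α₂_le⟩

lemma cos_β₁_pos (h : ConfigAngles α₁ α₂ β₁ β₂) : 0 < cos β₁ :=
  cos_pos_of_mem_Ioo ⟨by linarith [h.β₁_nonneg, pi_pos],
    by linarith [h.β₂_nonneg, h.β_le, pi_pos]⟩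

lemma sin_sq_α_pos (h : ConfigAngles α₁ α₂ β₁ β₂) : 0 < sin α₁ ^ 2 + sin α₂ ^ 2 := by
  rcases h.α₁_nonneg.eq_or_lt with h0 | h0
  · have := sin_pos_of_pos_of_lt_pi (x := α₂) (by linarith [h.β_pos, h.β_lt_α])
      (by linarith [h.α₂_le, pi_pos])
    positivity
  · have := sin_pos_of_pos_of_lt_pi h0 (by linarith [h.α₂_nonneg, h.α_le])
    positivity

lemma sin_sq_β_pos (h : ConfigAngles α₁ α₂ β₁ β₂) : 0 < sin β₁ ^ 2 + sin β₂ ^ 2 := by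
  rcases h.β₁_nonneg.eq_or_lt with h0 | h0
  · have := sin_pos_of_pos_of_lt_pi (x := β₂) (by linarith [h.β_pos])
      (by linarith [h.β_le, pi_pos])
    positivity
  · have := sin_pos_of_pos_of_lt_pi h0 (by linarith [h.β₂_nonneg, h.β_le, pi_pos])
    positivity

lemma cos_add_cos_add_pos (h : ConfigAngles α₁ α₂ β₁ β₂) :
    0 < cos α₂ + cos β₂ + 2 * cos α₁ * cos β₁ := by
  have hβ₁ := h.cos_β₁_pos
  have hα₂β₂ : α₂ + β₂ ≤ π := by
    rcases h.β_le_or_le_α₁ with h' | h'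
    · linarith [h.α₂_le, h.β₁_nonneg]
    · linarith [h.α_le, h.β_le, h.β₁_nonneg]
  have hβ₂ : -cos α₂ ≤ cos β₂ := by
    rw [← cos_pi_sub]
    exact cos_le_cos_of_nonneg_of_le_pi h.β₂_nonneg (by linarith [h.α₂_nonneg]) (by linarith)
  rcases h.cos_α₁_nonneg.eq_or_lt with h0 | h0
  · have hα₁ : π / 2 ≤ α₁ := not_lt.1 fun hlt =>
      (cos_pos_of_mem_Ioo ⟨by linarith [h.α₁_nonneg, pi_pos], hlt⟩).ne h0
    have hβ₂' : cos (2 * π / 3) ≤ cos β₂ := cos_le_cos_of_nonneg_of_le_pi h.β₂_nonneg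
      (by linarith [pi_pos]) (by linarith [h.β_le, h.β₁_nonneg])
    have hα₂ : α₂ = 0 := le_antisymm (by linarith [h.α_le]) h.α₂_nonneg
    rw [show 2 * π / 3 = π - π / 3 by ring, cos_pi_sub, cos_pi_div_three] at hβ₂'
    rw [hα₂, cos_zero, ← h0]
    linarith
  · have : 0 < 2 * cos α₁ * cos β₁ := by positivity
    linarith

lemma hypDisc_lt_iff (h : ConfigAngles α₁ α₂ β₁ β₂) :
    hypDisc α₁ α₂ β₁ < hypDisc α₁ β₁ β₂ ↔ β₂ < α₂ := by
  rw [← sub_pos, hypDisc_sub_hypDisc, mul_pos_iff_of_pos_right h.cos_add_cos_add_pos, sub_pos]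
  exact strictAntiOn_cos.lt_iff_gt ⟨h.α₂_nonneg, by linarith [h.α₂_le, pi_pos]⟩
    ⟨h.β₂_nonneg, by linarith [h.β_le, h.β₁_nonneg, pi_pos]⟩

lemma hypDisc_le_iff (h : ConfigAngles α₁ α₂ β₁ β₂) :
    hypDisc α₁ α₂ β₁ ≤ hypDisc α₁ β₁ β₂ ↔ β₂ ≤ α₂ := by
  rw [← sub_nonneg, hypDisc_sub_hypDisc, mul_nonneg_iff_of_pos_right h.cos_add_cos_add_pos,
    sub_nonneg]
  exact strictAntiOn_cos.le_iff_ge ⟨h.α₂_nonneg, by linarith [h.α₂_le, pi_pos]⟩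
    ⟨h.β₂_nonneg, by linarith [h.β_le, h.β₁_nonneg, pi_pos]⟩

lemma hypDisc_pos (h : ConfigAngles α₁ α₂ β₁ β₂) (h0 : β₂ = 0 → α₁ = 0) :
    0 < hypDisc α₁ α₂ β₁ := by
  refine _root_.hypDisc_pos h.α₁_nonneg h.α₂_nonneg h.β₁_nonneg ?_
  by_contra! hπ
  have hα₁ := h0 (le_antisymm (by linarith [h.α₁_add_α₂_le, h.β_le]) h.β₂_nonneg)
  rcases h.β_le_or_le_α₁ with h' | h' <;>
    linarith [h.α₁_add_α₂_le, h.β₂_nonneg, pi_pos]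

lemma α₁_eq_zero_of_sin_eq_zero (h : ConfigAngles α₁ α₂ β₁ β₂) (hs : sin α₁ = 0) : α₁ = 0 :=
  (sin_eq_zero_iff_of_lt_of_lt (by linarith [h.α₁_nonneg, pi_pos])
    (by linarith [h.α₂_nonneg, h.α_le, pi_pos])).1 hs

lemma α₁_eq_zero_of_isEdgeSolution (h : ConfigAngles α₁ α₂ β₁ β₂)
    (hsol : IsEdgeSolution α₁ α₂ β₁ β₂) (h0 : β₂ = 0) : α₁ = 0 := by
  have hdisc : 0 < hypDisc α₁ β₁ β₂ := by
    have hsq : hypDisc α₁ β₁ β₂ = (cos α₁ + cos β₁) ^ 2 := by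
      rw [hypDisc, h0, cos_zero]
      ring
    have hβ₁ := h.cos_β₁_pos
    have hα₁ := h.cos_α₁_nonneg
    rw [hsq]
    positivity
  have hsin : hypDisc α₁ β₁ β₂ * sin α₁ ^ 2 = 0 := by
    rw [hsol.2, h0, sin_zero]
    ring
  exact h.α₁_eq_zero_of_sin_eq_zero (pow_eq_zero_iff two_ne_zero |>.1
    ((mul_eq_zero.1 hsin).resolve_left hdisc.ne'))

end ConfigAngles

/-- A solution of the edge conditions after extraction of square roots: `r` is the common ratio
`sin β₁ / sin α₂ = sin β₂ / sin α₁`. -/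
structure RatioSolution (α₁ α₂ β₁ β₂ r : ℝ) : Prop extends ConfigAngles α₁ α₂ β₁ β₂ where
  r_pos : 0 < r
  disc_pos : 0 < hypDisc α₁ α₂ β₁
  disc_eq : hypDisc α₁ β₁ β₂ = r ^ 2 * hypDisc α₁ α₂ β₁
  sin_β₁ : sin β₁ = r * sin α₂
  sin_β₂ : sin β₂ = r * sin α₁

lemma exists_pos_ratio {k l s p y q : ℝ} (hk : 0 < k) (hs : 0 ≤ s) (hp : 0 ≤ p) (hy : 0 ≤ y)
    (hq : 0 ≤ q) (hyq : 0 < y ^ 2 + q ^ 2) (h₁ : k * y ^ 2 = l * p ^ 2)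
    (h₂ : l * s ^ 2 = k * q ^ 2) :
    ∃ r, 0 < r ∧ l = r ^ 2 * k ∧ y = r * p ∧ q = r * s := by
  have hl : 0 < l := by
    have hsum : l * (s ^ 2 + p ^ 2) = k * (y ^ 2 + q ^ 2) := by linear_combination h₂ - h₁
    exact pos_of_mul_pos_left (hsum ▸ mul_pos hk hyq) (by positivity)
  obtain ⟨r, hr, hrk⟩ : ∃ r, 0 < r ∧ l = r ^ 2 * k := by
    refine ⟨√(l / k), sqrt_pos.2 (div_pos hl hk), ?_⟩
    rw [sq_sqrt (div_pos hl hk).le, div_mul_cancel₀ l hk.ne']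
  refine ⟨r, hr, hrk, ?_, ?_⟩
  · rw [← sq_eq_sq₀ hy (by positivity), ← mul_right_inj' hk.ne', h₁, hrk]
    ring
  · rw [← sq_eq_sq₀ hq (by positivity), ← mul_right_inj' hk.ne', ← h₂, hrk]
    ring

lemma IsEdgeSolution.exists_ratioSolution {α₁ α₂ β₁ β₂ : ℝ} (hsol : IsEdgeSolution α₁ α₂ β₁ β₂)
    (h : ConfigAngles α₁ α₂ β₁ β₂) : ∃ r, RatioSolution α₁ α₂ β₁ β₂ r := by
  have hpos := h.hypDisc_pos (h.α₁_eq_zero_of_isEdgeSolution hsol)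
  obtain ⟨r, hr, hdisc, hβ₁, hβ₂⟩ := exists_pos_ratio hpos h.sin_α₁_nonneg h.sin_α₂_nonneg
    h.sin_β₁_nonneg h.sin_β₂_nonneg h.sin_sq_β_pos hsol.1 hsol.2
  exact ⟨r, h, hr, hpos, hdisc, hβ₁, hβ₂⟩

namespace RatioSolution

variable {α₁ α₂ β₁ β₂ r : ℝ}

lemma sin_mul_sin_eq (h : RatioSolution α₁ α₂ β₁ β₂ r) :
    sin α₁ * sin β₁ = sin α₂ * sin β₂ := by
  rw [h.sin_β₁, h.sin_β₂]
  ring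

lemma ratio_lt_one (h : RatioSolution α₁ α₂ β₁ β₂ r) : r < 1 := by
  by_contra! hr
  have hβ₂α₂ : β₂ ≤ α₂ := by
    rw [← h.hypDisc_le_iff, h.disc_eq]
    exact le_mul_of_one_le_left h.disc_pos.le (one_le_pow₀ hr)
  have hα₂β₁ : α₂ ≤ β₁ := by
    by_contra! hlt
    have := sin_lt_sin_of_lt_of_le_pi_div_two (by linarith [h.β₁_nonneg, pi_pos]) h.α₂_le hlt
    exact this.not_ge (h.sin_β₁ ▸ le_mul_of_one_le_left h.sin_α₂_nonneg hr)
  have hα₁β₂ : α₁ ≤ β₂ := by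
    by_contra! hlt
    have := sin_lt_sin_of_lt_of_le_pi_div_two (by linarith [h.β₂_nonneg, pi_pos])
      (by linarith [h.α₂_nonneg, h.α_le]) hlt
    exact this.not_ge (h.sin_β₂ ▸ le_mul_of_one_le_left h.sin_α₁_nonneg hr)
  linarith [h.β_lt_α]

lemma α₂_lt_β₂ (h : RatioSolution α₁ α₂ β₁ β₂ r) : α₂ < β₂ := by
  rw [← not_le, ← h.hypDisc_le_iff, not_le, h.disc_eq]
  exact mul_lt_of_lt_one_left h.disc_pos (pow_lt_one₀ h.r_pos.le h.ratio_lt_one two_ne_zero)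

lemma β₁_le_α₂ (h : RatioSolution α₁ α₂ β₁ β₂ r) : β₁ ≤ α₂ := by
  by_contra! hlt
  have := sin_lt_sin_of_lt_of_le_pi_div_two (by linarith [h.α₂_nonneg, pi_pos])
    (by linarith [h.β₂_nonneg, h.β_le, pi_pos]) hlt
  exact this.not_ge (h.sin_β₁ ▸ mul_le_of_le_one_left h.sin_α₂_nonneg h.ratio_lt_one.le)

lemma sin_α₁_pos (h : RatioSolution α₁ α₂ β₁ β₂ r) : 0 < sin α₁ := by
  have hβ₂ : 0 < sin β₂ := sin_pos_of_pos_of_lt_pi (h.α₂_nonneg.trans_lt h.α₂_lt_β₂)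
    (by linarith [h.β₁_nonneg, h.β_le, pi_pos])
  exact pos_of_mul_pos_right (h.sin_β₂ ▸ hβ₂) h.r_pos.le

lemma sq_le_disc_add (h : RatioSolution α₁ α₂ β₁ β₂ r) :
    r ^ 2 ≤ hypDisc α₁ β₁ β₂ + 2 * sin β₁ ^ 2 := by
  have hr2 : r ^ 2 ≤ 1 := pow_le_one₀ h.r_pos.le h.ratio_lt_one.le
  have hprod : 0 ≤ cos α₁ ^ 2 + 2 * cos α₁ * cos α₂ * cos β₁ := by
    have := h.cos_α₁_nonneg
    have := h.cos_α₂_nonneg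
    have := h.cos_β₁_pos
    positivity
  have hdisc : 1 - sin α₂ ^ 2 - sin β₁ ^ 2 ≤ hypDisc α₁ α₂ β₁ := by
    rw [hypDisc, cos_sq' α₂, cos_sq' β₁]
    linarith
  calc r ^ 2 = r ^ 2 * (1 - sin α₂ ^ 2 - sin β₁ ^ 2) + (sin β₁ ^ 2 + r ^ 2 * sin β₁ ^ 2) := by
        rw [h.sin_β₁]
        ring
    _ ≤ r ^ 2 * hypDisc α₁ α₂ β₁ + (sin β₁ ^ 2 + 1 * sin β₁ ^ 2) := by gcongr
    _ = hypDisc α₁ β₁ β₂ + 2 * sin β₁ ^ 2 := by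
        rw [h.disc_eq]
        ring

lemma β₂_le_pi_div_two (h : RatioSolution α₁ α₂ β₁ β₂ r) : β₂ ≤ π / 2 := by
  rcases h.β_le_or_le_α₁ with hβ | hα₁
  · linarith [h.β₁_nonneg]
  by_contra! hβ₂
  have hcβ₁ := h.cos_β₁_pos
  have hcα₁ : cos α₁ ≤ 1 / 2 := by
    rw [← cos_pi_div_three]
    exact cos_le_cos_of_nonneg_of_le_pi (by positivity)
      (by linarith [h.α₂_nonneg, h.α_le, pi_pos]) hα₁
  have hcβ₂ : cos β₂ ≤ 0 := cos_nonpos_of_pi_div_two_le_of_le hβ₂.le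
    (by linarith [h.β₁_nonneg, h.β_le, pi_pos])
  have hcβ₂' : -(1 / 2) ≤ cos β₂ := by
    rw [← cos_pi_div_three, ← cos_pi_sub]
    exact cos_le_cos_of_nonneg_of_le_pi h.β₂_nonneg (by linarith [pi_pos])
      (by linarith [h.β₁_nonneg, h.β_le])
  have hsβ₁ : sin β₁ ^ 2 < (1 / 2) ^ 2 := by
    refine pow_lt_pow_left₀ ?_ h.sin_β₁_nonneg two_ne_zero
    rw [← sin_pi_div_six]
    exact sin_lt_sin_of_lt_of_le_pi_div_two (by linarith [h.β₁_nonneg, pi_pos])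
      (by linarith [pi_pos]) (by linarith [h.β_le, pi_pos])
  have hdisc : hypDisc α₁ β₁ β₂ ≤ 1 / 4 := by
    have hsq : (cos α₁ + cos β₁ * cos β₂) ^ 2 ≤ (1 / 2) ^ 2 := by
      refine sq_le_sq' ?_ ?_
      · nlinarith only [cos_le_one β₁, hcβ₁, hcβ₂, hcβ₂', h.cos_α₁_nonneg]
      · linarith [mul_nonpos_of_nonneg_of_nonpos hcβ₁.le hcβ₂]
    rw [hypDisc_rotate]
    linarith [hypDisc_add_sin_sq_mul β₁ β₂ α₁,
      mul_nonneg (sq_nonneg (sin β₁)) (sq_nonneg (sin β₂))]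
  have hr2 : 3 / 4 ≤ r ^ 2 := by
    calc 3 / 4 ≤ sin β₂ ^ 2 := by rw [sin_sq]; nlinarith only [hcβ₂, hcβ₂']
      _ = r ^ 2 * sin α₁ ^ 2 := by rw [h.sin_β₂, mul_pow]
      _ ≤ r ^ 2 := mul_le_of_le_one_right (sq_nonneg r) (sin_sq_le_one α₁)
  linarith [h.sq_le_disc_add]

lemma β₂_lt_α₁ (h : RatioSolution α₁ α₂ β₁ β₂ r) : β₂ < α₁ := by
  by_contra! hle
  have hsin := sin_le_sin_of_le_of_le_pi_div_two (by linarith [h.α₁_nonneg, pi_pos])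
    h.β₂_le_pi_div_two hle
  rw [h.sin_β₂] at hsin
  exact (mul_lt_of_lt_one_left h.sin_α₁_pos h.ratio_lt_one).not_ge hsin

/-- The squares of both sides agree because `cosh² = 1 + sinh²` holds in both triangles. -/
lemma cos_add_cos_mul_cos (h : RatioSolution α₁ α₂ β₁ β₂ r) :
    cos α₁ + cos β₁ * cos β₂ = r * (cos α₂ + cos α₁ * cos β₁) := by
  have hα₁ := h.cos_α₁_nonneg
  have hα₂ := h.cos_α₂_nonneg
  have hβ₁ := h.cos_β₁_pos
  have hβ₂ : 0 ≤ cos β₂ :=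
    cos_nonneg_of_mem_Icc ⟨by linarith [h.β₂_nonneg, pi_pos], h.β₂_le_pi_div_two⟩
  have hr := h.r_pos
  rw [← sq_eq_sq₀ (by positivity) (by positivity), mul_pow, mul_comm (cos α₁) (cos β₁),
    ← hypDisc_add_sin_sq_mul, ← hypDisc_add_sin_sq_mul, ← hypDisc_rotate, hypDisc_rotate β₁,
    h.disc_eq, h.sin_β₂]
  ring

variable {α₁' α₂' β₁' β₂' r' : ℝ}

lemma β₁_le_of_α₁_le (h : RatioSolution α₁ α₂ β₁ β₂ r) (h' : RatioSolution α₁' α₂' β₁' β₂' r')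
    (hα : α₂ + 2 * α₁ = α₂' + 2 * α₁') (hβ : β₂ + 2 * β₁ = β₂' + 2 * β₁')
    (hle : α₁ ≤ α₁') : β₁' ≤ β₁ := by
  by_contra! hlt
  have hsα₁ : sin α₁ ≤ sin α₁' := sin_le_sin_of_le_of_le_pi_div_two
    (by linarith [h.α₁_nonneg, pi_pos]) (by linarith [h'.α₂_nonneg, h'.α_le]) hle
  have hsα₂ : sin α₂' ≤ sin α₂ := sin_le_sin_of_le_of_le_pi_div_two
    (by linarith [h'.α₂_nonneg, pi_pos]) h.α₂_le (by linarith)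
  have hsβ₁ : sin β₁ < sin β₁' := sin_lt_sin_of_lt_of_le_pi_div_two
    (by linarith [h.β₁_nonneg, pi_pos]) (by linarith [h'.β₂_nonneg, h'.β_le, pi_pos]) hlt
  have hsβ₂ : sin β₂' ≤ sin β₂ := sin_le_sin_of_le_of_le_pi_div_two
    (by linarith [h'.β₂_nonneg, pi_pos]) h.β₂_le_pi_div_two (by linarith)
  refine lt_irrefl (sin α₁ * sin β₁) ?_
  calc sin α₁ * sin β₁ < sin α₁ * sin β₁' := mul_lt_mul_of_pos_left hsβ₁ h.sin_α₁_pos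
    _ ≤ sin α₁' * sin β₁' := mul_le_mul_of_nonneg_right hsα₁ h'.sin_β₁_nonneg
    _ = sin α₂' * sin β₂' := h'.sin_mul_sin_eq
    _ ≤ sin α₂ * sin β₂ := mul_le_mul hsα₂ hsβ₂ h'.sin_β₂_nonneg h.sin_α₂_nonneg
    _ = sin α₁ * sin β₁ := h.sin_mul_sin_eq.symm

lemma α₂_lt_pi_div_three (h : RatioSolution α₁ α₂ β₁ β₂ r) : α₂ < π / 3 := by
  linarith [h.α₂_lt_β₂, h.β₂_lt_α₁, h.α_le]

lemma mul_sub_le_β₁_sub (h : RatioSolution α₁ α₂ β₁ β₂ r)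
    (h' : RatioSolution α₁' α₂' β₁' β₂' r') (hα : α₂ + 2 * α₁ = α₂' + 2 * α₁')
    (hβ : β₂ + 2 * β₁ = β₂' + 2 * β₁') (hle : α₁ ≤ α₁') (hr : r' ≤ r) :
    r * (α₁' - α₁) ≤ β₁ - β₁' := by
  have hsα₂ := half_sub_le_sin_sub_sin h'.α₂_nonneg (show α₂' ≤ α₂ by linarith)
    h.α₂_lt_pi_div_three.le
  calc r * (α₁' - α₁) ≤ r * (sin α₂ - sin α₂') :=
        mul_le_mul_of_nonneg_left (by linarith) h.r_pos.le
    _ ≤ r * sin α₂ - r' * sin α₂' := by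
        rw [mul_sub]
        gcongr
        exact h'.sin_α₂_nonneg
    _ = sin β₁ - sin β₁' := by rw [h.sin_β₁, h'.sin_β₁]
    _ ≤ β₁ - β₁' := sin_sub_sin_le_sub (h.β₁_le_of_α₁_le h' hα hβ hle)

lemma ratio_lt_of_α₁_lt (h : RatioSolution α₁ α₂ β₁ β₂ r)
    (h' : RatioSolution α₁' α₂' β₁' β₂' r') (hα : α₂ + 2 * α₁ = α₂' + 2 * α₁')
    (hβ : β₂ + 2 * β₁ = β₂' + 2 * β₁') (hlt : α₁ < α₁') : r < r' := by
  by_contra! hr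
  have hle := h.mul_sub_le_β₁_sub h' hα hβ hlt.le hr
  have hpos : 0 < β₁ - β₁' := (mul_pos h.r_pos (sub_pos.2 hlt)).trans_le hle
  have hcα : 0 ≤ cos ((α₁' + α₁) / 2) := cos_nonneg_of_mem_Icc
    ⟨by linarith [h.α₁_nonneg, h'.α₁_nonneg, pi_pos],
      by linarith [h.α₂_nonneg, h.α_le, h'.α₂_nonneg, h'.α_le]⟩
  have hcβα : cos ((α₁' + α₁) / 2) < cos ((β₂' + β₂) / 2) := cos_lt_cos_of_nonneg_of_le_pi
    (by linarith [h.β₂_nonneg, h'.β₂_nonneg])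
    (by linarith [h.α₂_nonneg, h.α_le, h'.α₂_nonneg, h'.α_le, pi_pos])
    (by linarith [h.β₂_lt_α₁, h'.β₂_lt_α₁])
  have hsβ₂ := half_sub_mul_cos_le_sin_sub_sin (show β₂ ≤ β₂' by linarith)
    (by linarith [h.β₂_nonneg, h'.β₁_nonneg, h'.β_le]) (hcα.trans hcβα.le)
  refine lt_irrefl ((β₁ - β₁') * cos ((α₁' + α₁) / 2)) ?_
  calc (β₁ - β₁') * cos ((α₁' + α₁) / 2) < (β₁ - β₁') * cos ((β₂' + β₂) / 2) :=
        mul_lt_mul_of_pos_left hcβα hpos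
    _ = 1 / 2 * (β₂' - β₂) * cos ((β₂' + β₂) / 2) := by
        congr 1
        linarith
    _ ≤ sin β₂' - sin β₂ := hsβ₂
    _ = r' * sin α₁' - r * sin α₁ := by rw [h.sin_β₂, h'.sin_β₂]
    _ ≤ r * (sin α₁' - sin α₁) := by
        rw [mul_sub]
        gcongr
        exact h'.sin_α₁_nonneg
    _ ≤ r * ((α₁' - α₁) * cos ((α₁' + α₁) / 2)) :=
        mul_le_mul_of_nonneg_left (sin_sub_sin_le_mul_cos hlt.le hcα) h.r_pos.le
    _ ≤ (β₁ - β₁') * cos ((α₁' + α₁) / 2) := by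
        rw [← mul_assoc]
        gcongr

lemma cos_β₁_mul_cos_β₂_le (h : RatioSolution α₁ α₂ β₁ β₂ r)
    (h' : RatioSolution α₁' α₂' β₁' β₂' r') (hβ : β₂ + 2 * β₁ = β₂' + 2 * β₁')
    (hle : β₁' ≤ β₁) : cos β₁' * cos β₂' ≤ cos β₁ * cos β₂ := by
  have hadd : cos (β₂' + β₁') ≤ cos (β₂ + β₁) := cos_le_cos_of_nonneg_of_le_pi
    (by linarith [h.β₁_nonneg, h.β₂_nonneg])
    (by linarith [h'.β₁_nonneg, h'.β_le, pi_pos]) (by linarith)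
  have hsub : cos (β₂' - β₁') ≤ cos (β₂ - β₁) := cos_le_cos_of_nonneg_of_le_pi
    (by linarith [h.β₁_le_α₂, h.α₂_lt_β₂])
    (by linarith [h'.β₁_nonneg, h'.β_le, pi_pos]) (by linarith)
  rw [cos_add, cos_add] at hadd
  rw [cos_sub, cos_sub] at hsub
  linarith

lemma not_α₁_lt (h : RatioSolution α₁ α₂ β₁ β₂ r) (h' : RatioSolution α₁' α₂' β₁' β₂' r')
    (hα : α₂ + 2 * α₁ = α₂' + 2 * α₁') (hβ : β₂ + 2 * β₁ = β₂' + 2 * β₁') : ¬ α₁ < α₁' := by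
  intro hlt
  have hr := h.ratio_lt_of_α₁_lt h' hα hβ hlt
  have hβ₁ := h.β₁_le_of_α₁_le h' hα hβ hlt.le
  have hcβ := h.cos_β₁_mul_cos_β₂_le h' hβ hβ₁
  have hcα₁ : cos α₁' ≤ cos α₁ := cos_le_cos_of_nonneg_of_le_pi h.α₁_nonneg
    (by linarith [h'.α₂_nonneg, h'.α_le, pi_pos]) hlt.le
  have hcα₂ : cos α₂ ≤ cos α₂' := cos_le_cos_of_nonneg_of_le_pi h'.α₂_nonneg
    (by linarith [h.α₂_le, pi_pos]) (by linarith)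
  have hcα₂_pos : 0 < cos α₂' := cos_pos_of_mem_Ioo
    ⟨by linarith [h'.α₂_nonneg, pi_pos], by linarith [h'.α₂_lt_pi_div_three, pi_pos]⟩
  have hrβ₁ : r * cos β₁ ≤ r' * cos β₁' := mul_le_mul hr.le
    (cos_le_cos_of_nonneg_of_le_pi h'.β₁_nonneg (by linarith [h.β₂_nonneg, h.β_le, pi_pos]) hβ₁)
    h.cos_β₁_pos.le h'.r_pos.le
  have hrβ₁' : r' * cos β₁' ≤ 1 :=
    mul_le_one₀ h'.ratio_lt_one.le h'.cos_β₁_pos.le (cos_le_one β₁')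
  refine lt_irrefl (r * cos α₂) ?_
  calc r * cos α₂ ≤ r * cos α₂' := mul_le_mul_of_nonneg_left hcα₂ h.r_pos.le
    _ < r' * cos α₂' := mul_lt_mul_of_pos_right hr hcα₂_pos
    _ = cos α₁' * (1 - r' * cos β₁') + cos β₁' * cos β₂' := by
        linear_combination -h'.cos_add_cos_mul_cos
    _ ≤ cos α₁ * (1 - r * cos β₁) + cos β₁ * cos β₂ := add_le_add
        (mul_le_mul hcα₁ (by linarith) (by linarith) h.cos_α₁_nonneg) hcβ
    _ = r * cos α₂ := by linear_combination h.cos_add_cos_mul_cos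

lemma eq_of_add_two_mul_eq (h : RatioSolution α₁ α₂ β₁ β₂ r)
    (h' : RatioSolution α₁' α₂' β₁' β₂' r') (hα : α₂ + 2 * α₁ = α₂' + 2 * α₁')
    (hβ : β₂ + 2 * β₁ = β₂' + 2 * β₁') : α₁ = α₁' ∧ β₁ = β₁' := by
  have hα₁ : α₁ = α₁' := le_antisymm (not_lt.1 (h'.not_α₁_lt h hα.symm hβ.symm))
    (not_lt.1 (h.not_α₁_lt h' hα hβ))
  exact ⟨hα₁, le_antisymm (h'.β₁_le_of_α₁_le h hα.symm hβ.symm hα₁.ge)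
    (h.β₁_le_of_α₁_le h' hα hβ hα₁.le)⟩

end RatioSolution

namespace ConfigAngles

variable {α₁ α₂ β₁ β₂ : ℝ}

lemma sin_α₂_pos_of_le (h : ConfigAngles α₁ α₂ β₁ β₂) (hle : α₁ ≤ α₂) : 0 < sin α₂ :=
  sin_pos_of_pos_of_lt_pi (by linarith [h.β_pos, h.β_lt_α]) (by linarith [h.α₂_le, pi_pos])

lemma β₂_lt_α₂ (h : ConfigAngles α₁ α₂ β₁ β₂) (hc : sin α₁ * sin β₁ = sin α₂ * sin β₂)
    (hle : α₁ ≤ α₂) : β₂ < α₂ := by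
  by_contra! hαβ
  have hsα : sin α₁ ≤ sin α₂ :=
    sin_le_sin_of_le_of_le_pi_div_two (by linarith [h.α₁_nonneg, pi_pos]) h.α₂_le hle
  have hsβ : sin β₂ ≤ sin β₁ := le_of_mul_le_mul_left
    (hc ▸ mul_le_mul_of_nonneg_right hsα h.sin_β₁_nonneg) (h.sin_α₂_pos_of_le hle)
  have hβ : β₂ ≤ β₁ := not_lt.1 fun hlt => hsβ.not_gt
    (sin_lt_sin_of_lt_of_add_lt_pi h.β₁_nonneg hlt (by linarith [h.β_le, h.β₁_nonneg, pi_pos]))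
  linarith [h.β_lt_α]

lemma sin_β₁_le_sin_α₂_and_sin_β₂_le_sin_α₁ (h : ConfigAngles α₁ α₂ β₁ β₂)
    (hc : sin α₁ * sin β₁ = sin α₂ * sin β₂) (hle : α₁ ≤ α₂) :
    sin β₁ ≤ sin α₂ ∧ sin β₂ ≤ sin α₁ := by
  have hα₂ := h.sin_α₂_pos_of_le hle
  rcases le_or_gt (sin β₁) (sin α₂) with hs | hs
  · refine ⟨hs, le_of_mul_le_mul_left ?_ hα₂⟩
    rw [← hc, mul_comm]
    exact mul_le_mul_of_nonneg_right hs h.sin_α₁_nonneg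
  · have hα₂β₁ : α₂ < β₁ := not_le.1 fun hβα => hs.not_ge
      (sin_le_sin_of_le_of_le_pi_div_two (by linarith [h.β₁_nonneg, pi_pos]) h.α₂_le hβα)
    have hsα₁ : sin α₁ ≤ sin β₂ := by
      refine le_of_mul_le_mul_left ?_ hα₂
      rw [← hc, mul_comm]
      exact mul_le_mul_of_nonneg_left hs.le h.sin_α₁_nonneg
    have hα₁β₂ : α₁ ≤ β₂ := not_lt.1 fun hβα => hsα₁.not_gt
      (sin_lt_sin_of_lt_of_le_pi_div_two (by linarith [h.β₂_nonneg, pi_pos])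
        (by linarith [h.α₂_nonneg, h.α_le]) hβα)
    linarith [h.β_lt_α]

lemma α₁_eq_zero_of_sin_mul_sin_eq (h : ConfigAngles α₁ α₂ β₁ β₂)
    (hc : sin α₁ * sin β₁ = sin α₂ * sin β₂) (h0 : β₂ = 0) : α₁ = 0 := by
  have hβ := h.sin_sq_β_pos
  rw [h0, sin_zero] at hβ hc
  have hβ₁ : sin β₁ ≠ 0 := fun hβ₁ => by simp [hβ₁] at hβ
  exact h.α₁_eq_zero_of_sin_eq_zero
    ((mul_eq_zero.1 (hc.trans (mul_zero _))).resolve_right hβ₁)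

lemma edgeDefect_neg (h : ConfigAngles α₁ α₂ β₁ β₂)
    (hc : sin α₁ * sin β₁ = sin α₂ * sin β₂) (hle : α₁ ≤ α₂) : edgeDefect α₁ α₂ β₁ β₂ < 0 := by
  obtain ⟨hsβ₁, hsβ₂⟩ := h.sin_β₁_le_sin_α₂_and_sin_β₂_le_sin_α₁ hc hle
  have hpos := h.hypDisc_pos (h.α₁_eq_zero_of_sin_mul_sin_eq hc)
  rw [edgeDefect, sub_neg]
  calc hypDisc α₁ α₂ β₁ * (sin β₁ ^ 2 + sin β₂ ^ 2)
      ≤ hypDisc α₁ α₂ β₁ * (sin α₂ ^ 2 + sin α₁ ^ 2) := by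
        gcongr
        exacts [h.sin_β₁_nonneg, h.sin_β₂_nonneg]
    _ = hypDisc α₁ α₂ β₁ * (sin α₁ ^ 2 + sin α₂ ^ 2) := by rw [add_comm (sin α₂ ^ 2)]
    _ < hypDisc α₁ β₁ β₂ * (sin α₁ ^ 2 + sin α₂ ^ 2) :=
        mul_lt_mul_of_pos_right (h.hypDisc_lt_iff.2 (h.β₂_lt_α₂ hc hle)) h.sin_sq_α_pos

lemma isEdgeSolution_of_edgeDefect_eq_zero (h : ConfigAngles α₁ α₂ β₁ β₂)
    (hc : sin α₁ * sin β₁ = sin α₂ * sin β₂) (hdefect : edgeDefect α₁ α₂ β₁ β₂ = 0) :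
    IsEdgeSolution α₁ α₂ β₁ β₂ := by
  have hS := h.sin_sq_α_pos.ne'
  have hc2 : sin α₁ ^ 2 * sin β₁ ^ 2 = sin α₂ ^ 2 * sin β₂ ^ 2 := by
    rw [← mul_pow, hc, mul_pow]
  rw [edgeDefect] at hdefect
  constructor
  · apply mul_right_cancel₀ hS
    linear_combination hypDisc α₁ α₂ β₁ * hc2 + sin α₂ ^ 2 * hdefect
  · apply mul_right_cancel₀ hS
    linear_combination hypDisc α₁ α₂ β₁ * hc2 - sin α₁ ^ 2 * hdefect

end ConfigAngles

section Domain

open Set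

/-- The constraints on the bounds of the rectangle `Icc lo A ×ˢ Icc 0 B` that hold for the domain
`D`, where `A = π/a`, `B = π/b` and `lo` is the left end of the `α₁`-interval. -/
structure AdmissibleBounds (A B lo : ℝ) : Prop where
  B_pos : 0 < B
  B_lt_A : B < A
  A_le : A ≤ π / 2
  B_le : B ≤ π / 3
  lo_nonneg : 0 ≤ lo
  three_mul_lo_le : 3 * lo ≤ 2 * A
  two_mul_sub_le : 2 * A - 2 * lo ≤ π / 2
  two_mul_sub_lo_le : 2 * A - lo ≤ 2 * π / 3
  B_le_or_le_lo : B ≤ π / 4 ∨ π / 3 ≤ lo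

namespace AdmissibleBounds

variable {A B lo : ℝ}

lemma lo_le_A (hD : AdmissibleBounds A B lo) : lo ≤ A := by
  linarith [hD.three_mul_lo_le, hD.B_pos, hD.B_lt_A]

lemma configAngles (hD : AdmissibleBounds A B lo) {x y : ℝ} (hx : x ∈ Icc lo A)
    (hy : y ∈ Icc 0 B) : ConfigAngles x (2 * A - 2 * x) y (2 * B - 2 * y) where
  α₁_nonneg := hD.lo_nonneg.trans hx.1
  α₂_nonneg := by linarith [hx.2]
  β₁_nonneg := hy.1
  β₂_nonneg := by linarith [hy.2]
  β_pos := by linarith [hD.B_pos]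
  β_lt_α := by linarith [hD.B_lt_A]
  α_le := by linarith [hD.A_le]
  β_le := by linarith [hD.B_le]
  α₂_le := by linarith [hx.1, hD.two_mul_sub_le]
  α₁_add_α₂_le := by linarith [hx.1, hD.two_mul_sub_lo_le]
  β_le_or_le_α₁ := hD.B_le_or_le_lo.imp (fun h => by linarith) fun h => h.trans hx.1

lemma exists_isEdgeSolution (hD : AdmissibleBounds A B lo) (h : 0 ≤ edgeDefect A 0 0 (2 * B)) :
    ∃ x ∈ Icc lo A, ∃ y ∈ Icc 0 B, IsEdgeSolution x (2 * A - 2 * x) y (2 * B - 2 * y) := by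
  let curve : Set (Icc lo A × Icc 0 B) :=
    {z | sin z.1 * sin z.2 = sin (2 * A - 2 * z.1) * sin (2 * B - 2 * z.2)}
  let defect : Icc lo A × Icc 0 B → ℝ := fun z =>
    edgeDefect z.1 (2 * A - 2 * z.1) z.2 (2 * B - 2 * z.2)
  have hcurve : IsClosed curve := isClosed_eq (by fun_prop) (by fun_prop)
  have hdefect : Continuous defect := by
    simp only [defect, edgeDefect, hypDisc]
    fun_prop
  have hgraph : ∀ x, ∃! y, (x, y) ∈ curve := fun x =>
    have hx := hD.configAngles x.2 ⟨le_rfl, hD.B_pos.le⟩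
    existsUnique_mul_sin_eq hD.B_pos (by linarith [hD.B_le, pi_pos]) hx.sin_α₁_nonneg
      hx.sin_α₂_nonneg hx.sin_sq_α_pos
  obtain ⟨y₀, hy₀, -⟩ := hgraph ⟨lo, le_rfl, hD.lo_le_A⟩
  have hleft : defect (⟨lo, le_rfl, hD.lo_le_A⟩, y₀) < 0 :=
    (hD.configAngles ⟨le_rfl, hD.lo_le_A⟩ y₀.2).edgeDefect_neg hy₀
      (by linarith [hD.three_mul_lo_le])
  let right : Icc lo A × Icc 0 B := (⟨A, hD.lo_le_A, le_rfl⟩, ⟨0, le_rfl, hD.B_pos.le⟩)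
  have hright_mem : right ∈ curve := by simp [curve, right]
  have hright : 0 ≤ defect right := by simpa [defect, right] using h
  have : PreconnectedSpace (Icc lo A) := Subtype.preconnectedSpace isPreconnected_Icc
  obtain ⟨z, hz, hz0⟩ := exists_mem_eq_zero_of_isClosed_of_existsUnique hcurve hgraph hdefect
    hy₀ hright_mem hleft.le hright
  exact ⟨z.1, z.1.2, z.2, z.2.2,
    (hD.configAngles z.1.2 z.2.2).isEdgeSolution_of_edgeDefect_eq_zero hz hz0⟩

lemma existsUnique_isEdgeSolution (hD : AdmissibleBounds A B lo)
    (h : 0 ≤ edgeDefect A 0 0 (2 * B)) :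
    ∃! z : ℝ × ℝ, z ∈ Icc lo A ×ˢ Icc 0 B ∧
      IsEdgeSolution z.1 (2 * A - 2 * z.1) z.2 (2 * B - 2 * z.2) := by
  obtain ⟨x, hx, y, hy, hsol⟩ := hD.exists_isEdgeSolution h
  refine ⟨(x, y), ⟨⟨hx, hy⟩, hsol⟩, ?_⟩
  rintro ⟨x', y'⟩ ⟨⟨hx', hy'⟩, hsol'⟩
  obtain ⟨r, hr⟩ := hsol.exists_ratioSolution (hD.configAngles hx hy)
  obtain ⟨r', hr'⟩ := hsol'.exists_ratioSolution (hD.configAngles hx' hy')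
  exact Prod.ext_iff.2 (hr'.eq_of_add_two_mul_eq hr (by ring) (by ring))

end AdmissibleBounds

lemma exists_alphaI_eq_Icc {a b : ℤ} (ha : 2 ≤ a) (hab : a < b) :
    ∃ lo, alphaI a = Icc lo (π / a) ∧ AdmissibleBounds (π / a) (π / b) lo := by
  have hπ := pi_pos
  have pi_div_le : ∀ {m n : ℤ}, 0 < m → m ≤ n → π / n ≤ π / m := fun hm hmn =>
    div_le_div_of_nonneg_left hπ.le (by exact_mod_cast hm) (by exact_mod_cast hmn)
  have hB : 0 < π / b := div_pos hπ (by exact_mod_cast (by lia : 0 < b))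
  have hBA : π / b < π / a := div_lt_div_of_pos_left hπ
    (by exact_mod_cast (by lia : 0 < a)) (by exact_mod_cast hab)
  have hB3 : π / b ≤ π / 3 := mod_cast pi_div_le three_pos (by lia : 3 ≤ b)
  obtain rfl | rfl | ha4 : a = 2 ∨ a = 3 ∨ 4 ≤ a := by lia
  · refine ⟨π / 3, by simp [alphaI], hB, hBA, ?_, hB3, ?_, ?_, ?_, ?_, Or.inr le_rfl⟩ <;>
      push_cast <;> linarith
  · have hB4 : π / b ≤ π / 4 := mod_cast pi_div_le four_pos (by lia : 4 ≤ b)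
    refine ⟨π / 12, by simp [alphaI], hB, hBA, ?_, hB3, ?_, ?_, ?_, ?_, Or.inl hB4⟩ <;>
      push_cast <;> linarith
  · have hA4 : π / a ≤ π / 4 := mod_cast pi_div_le four_pos ha4
    have halpha : alphaI a = Icc 0 (π / a) := by
      rw [alphaI, if_neg (by lia), if_neg (by lia)]
    refine ⟨0, halpha, hB, hBA, ?_, hB3, le_rfl, ?_, ?_, ?_, Or.inl ?_⟩ <;> linarith

lemma pi_div_mem_alphaI {a b : ℤ} (ha : 2 ≤ a) (hab : a < b) : π / a ∈ alphaI a := by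
  obtain ⟨lo, hI, hD⟩ := exists_alphaI_eq_Icc ha hab
  rw [hI]
  exact ⟨hD.lo_le_A, le_rfl⟩

lemma f1_eq (a b : ℤ) (x y : ℝ) :
    f1 a b x y = hypDisc x y (2 * (π / b) - 2 * y) * sin (2 * (π / a) - 2 * x) ^ 2 -
      hypDisc x (2 * (π / a) - 2 * x) y * sin y ^ 2 := by
  simp only [f1, B00, B11, hypDisc, mul_div_assoc]
  ring

lemma f2_eq (a b : ℤ) (x y : ℝ) :
    f2 a b x y = hypDisc x (2 * (π / a) - 2 * x) y * sin (2 * (π / b) - 2 * y) ^ 2 -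
      hypDisc x y (2 * (π / b) - 2 * y) * sin x ^ 2 := by
  simp only [f2, B00, B11, hypDisc, mul_div_assoc]
  ring

lemma f1_eq_zero_and_f2_eq_zero_iff (a b : ℤ) (x y : ℝ) :
    f1 a b x y = 0 ∧ f2 a b x y = 0 ↔
      IsEdgeSolution x (2 * (π / a) - 2 * x) y (2 * (π / b) - 2 * y) := by
  rw [f1_eq, f2_eq, sub_eq_zero, sub_eq_zero]
  exact and_congr eq_comm eq_comm

lemma f2_pi_div_zero (a b : ℤ) : f2 a b (π / a) 0 = edgeDefect (π / a) 0 0 (2 * (π / b)) := by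
  simp [f2_eq, edgeDefect]

end Domain

theorem stmt10_general (a b : ℤ) (ha : 2 ≤ a) (hab : a < b) (h : 0 ≤ f2 a b (π / a) 0) :
    ∃! p : ℝ × ℝ, p ∈ Dom a b ∧ f1 a b p.1 p.2 = 0 ∧ f2 a b p.1 p.2 = 0 := by
  obtain ⟨lo, hI, hD⟩ := exists_alphaI_eq_Icc ha hab
  rw [f2_pi_div_zero] at h
  simpa only [Dom, hI, f1_eq_zero_and_f2_eq_zero_iff] using hD.existsUnique_isEdgeSolution h

theorem stmt10 (a b : ℤ) (ha : 2 ≤ a) (hab : a < b)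
    (h : ∀ α₁ ∈ alphaI a, f2 a b α₁ 0 > 0) :
    ∃! p : ℝ × ℝ, p ∈ Dom a b ∧ f1 a b p.1 p.2 = 0 ∧ f2 a b p.1 p.2 = 0 :=
  stmt10_general a b ha hab (h _ (pi_div_mem_alphaI ha hab)).le
end
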